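/- Let m ∈ {3, 5, 6} and let f: F_2^m → F_2 be any Boolean function of algebraic degree exactly 2 with zero constant term in its ANF such that, for every n with m ≤ n ≤ 20, the function f*: F_2^n → F_2 given by the CA-based construction is semi-bent and balanced. Then for every n with m ≤ n ≤ 20, the number of nonzero linear structures of f* equals 1 if n is odd and 3 if n is even. -/

import Mathlib

/-- The CA-based construction: given a local rule `f` of `m` variables and `n ≥ m`,
the `n`-variable function `f*` is the XOR of all output cells of the no-boundary CA. -/
def caStar (m n : ℕ) (h : m ≤ n) (f : (Fin m → ZMod 2) → ZMod 2) :
    (Fin n → ZMod 2) → ZMod 2 :=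
  fun x => ∑ i : Fin (n - m + 1),
    f (fun j => x ⟨i.val + j.val, by have hi := i.isLt; have hj := j.isLt; omega⟩)

/-- The ANF coefficient `a_I` of a Boolean function, via the Möbius transform:
`a_I = ⊕_{x : supp(x) ⊆ I} f(x)`. -/
def anf {n : ℕ} (f : (Fin n → ZMod 2) → ZMod 2) (I : Finset (Fin n)) : ZMod 2 :=
  ∑ x ∈ Finset.univ.filter (fun x : Fin n → ZMod 2 => ∀ i, x i = 1 → i ∈ I), f x

/-- The algebraic degree of a Boolean function: `max {|I| : a_I ≠ 0}` (0 for the zero function). -/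
def algDegree {n : ℕ} (f : (Fin n → ZMod 2) → ZMod 2) : ℕ :=
  (Finset.univ.filter fun I : Finset (Fin n) => anf f I ≠ 0).sup Finset.card

/-- The Walsh transform `W_f(a) = Σ_x (-1)^(f(x) ⊕ a·x)`. -/
def walsh {n : ℕ} (f : (Fin n → ZMod 2) → ZMod 2) (a : Fin n → ZMod 2) : ℤ :=
  ∑ x : Fin n → ZMod 2, (-1 : ℤ) ^ (f x + ∑ i, a i * x i).val

/-- The semi-bent value `λ`: `2^((n+1)/2)` for odd `n`, `2^((n+2)/2)` for even `n`. -/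
def sbLambda (n : ℕ) : ℤ := if Odd n then 2 ^ ((n + 1) / 2) else 2 ^ ((n + 2) / 2)

/-- A Boolean function is semi-bent if its Walsh transform takes only the values `0, λ, -λ`. -/
def semiBent {n : ℕ} (f : (Fin n → ZMod 2) → ZMod 2) : Prop :=
  ∀ a, walsh f a = 0 ∨ walsh f a = sbLambda n ∨ walsh f a = -sbLambda n

/-- A Boolean function is balanced if it takes the value 1 exactly `2^(n-1)` times. -/
def balanced {n : ℕ} (f : (Fin n → ZMod 2) → ZMod 2) : Prop :=
  (Finset.univ.filter fun x => f x = 1).card = 2 ^ (n - 1)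

/-- `b` is a linear structure of `g` if the derivative `D_b g(x) = g(x) ⊕ g(x ⊕ b)` is constant. -/
def isLinearStructure {n : ℕ} (g : (Fin n → ZMod 2) → ZMod 2)
    (b : Fin n → ZMod 2) : Prop :=
  (∀ x, g x + g (x + b) = 0) ∨ (∀ x, g x + g (x + b) = 1)

/-!
A function `g` of degree at most two has vanishing third differences, so every derivative
`D_b g` is either constant or affine and nonconstant, hence balanced. The autocorrelation
`∑ x, (-1) ^ D_b g x` is therefore `± 2 ^ n` when `b` is a linear structure and `0` otherwise.
Since the squared Walsh transform of `g` is the Walsh–Hadamard transform of its autocorrelation,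
Parseval gives `∑ a, W_g(a) ^ 2 = 2 ^ n * 2 ^ n` and `∑ a, W_g(a) ^ 4 = 2 ^ n * 2 ^ (2 * n) * N`,
where `N` counts the linear structures. If `W_g` takes only the values `0, ± A`, the second sum is
`A ^ 2` times the first, so `A ^ 2 = 2 ^ n * N`; the semi-bent amplitude makes `N` equal to `2` for
odd `n` and `4` for even `n`.
-/

open scoped fwdDiff

section PolynomialMaps

variable {M N R : Type*} [AddCommMonoid M] [AddCommMonoid N] [CommRing R]

variable (M R) in
/-- The module of polynomial maps `M → R` of degree less than `d`, in the sense that all `d`-fold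
iterated differences vanish. Using a strict bound lets the recursion start at the zero map. -/
def polyMapDegreeLT : ℕ → Submodule R (M → R)
  | 0 => ⊥
  | d + 1 =>
    { carrier := {g | ∀ h, Δ_[h] g ∈ polyMapDegreeLT d}
      add_mem' := fun hf hg h => by
        rw [fwdDiff_add]
        exact add_mem (hf h) (hg h)
      zero_mem' := fun h => by
        rw [show Δ_[h] (0 : M → R) = 0 from fwdDiff_const h 0]
        exact zero_mem _
      smul_mem' := fun r g hg h => by
        rw [fwdDiff_const_smul]
        exact Submodule.smul_mem _ r (hg h) }

lemma mem_polyMapDegreeLT_zero {g : M → R} : g ∈ polyMapDegreeLT M R 0 ↔ g = 0 :=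
  Submodule.mem_bot R

lemma mem_polyMapDegreeLT_succ {d : ℕ} {g : M → R} :
    g ∈ polyMapDegreeLT M R (d + 1) ↔ ∀ h, Δ_[h] g ∈ polyMapDegreeLT M R d :=
  Iff.rfl

lemma mem_polyMapDegreeLT_one {g : M → R} :
    g ∈ polyMapDegreeLT M R 1 ↔ ∀ x, g x = g 0 := by
  simp only [mem_polyMapDegreeLT_succ, mem_polyMapDegreeLT_zero, funext_iff, fwdDiff,
    Pi.zero_apply, sub_eq_zero]
  exact ⟨fun hg x => by simpa using hg x 0, fun hg h x => by rw [hg, hg x]⟩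

lemma polyMapDegreeLT_mono : Monotone (polyMapDegreeLT M R) := by
  refine monotone_nat_of_le_succ fun d => ?_
  induction d with
  | zero => exact bot_le
  | succ d ih => exact fun g hg h => ih (hg h)

lemma comp_addMonoidHom_mem_polyMapDegreeLT {d : ℕ} {g : N → R} (L : M →+ N)
    (hg : g ∈ polyMapDegreeLT N R d) : g ∘ L ∈ polyMapDegreeLT M R d := by
  induction d generalizing g with
  | zero =>
    rw [mem_polyMapDegreeLT_zero] at hg ⊢
    rw [hg, Pi.zero_comp]
  | succ d ih =>
    intro h
    have fwdDiff_comp : Δ_[h] (g ∘ L) = Δ_[L h] g ∘ L := by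
      ext x
      simp only [fwdDiff, Function.comp_apply, map_add]
    rw [fwdDiff_comp]
    exact ih (hg (L h))

lemma addMonoidHom_mul_mem_polyMapDegreeLT {d : ℕ} {g : M → R} (L : M →+ R)
    (hg : g ∈ polyMapDegreeLT M R d) : ⇑L * g ∈ polyMapDegreeLT M R (d + 1) := by
  induction d generalizing g with
  | zero =>
    rw [mem_polyMapDegreeLT_zero.mp hg, mul_zero]
    exact zero_mem _
  | succ d ih =>
    intro h
    have fwdDiff_mul : Δ_[h] (⇑L * g) = ⇑L * Δ_[h] g + L h • (g + Δ_[h] g) := by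
      ext x
      simp only [fwdDiff, Pi.mul_apply, Pi.add_apply, Pi.smul_apply, smul_eq_mul, map_add]
      ring
    rw [fwdDiff_mul]
    exact add_mem (ih (hg h)) (Submodule.smul_mem _ _
      (add_mem hg (polyMapDegreeLT_mono d.le_succ (hg h))))

lemma prod_addMonoidHom_mem_polyMapDegreeLT {ι : Type*} (L : ι → M →+ R) (I : Finset ι) :
    ∏ i ∈ I, ⇑(L i) ∈ polyMapDegreeLT M R (I.card + 1) := by
  classical
  induction I using Finset.induction_on with
  | empty => exact mem_polyMapDegreeLT_one.mpr fun _ => rfl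
  | insert i I hi ih =>
    rw [Finset.prod_insert hi, Finset.card_insert_of_notMem hi]
    exact addMonoidHom_mul_mem_polyMapDegreeLT (L i) ih

end PolynomialMaps

section AlgebraicNormalForm

lemma ite_eq_eq_prod_add_add_one {ι : Type*} [Fintype ι] [DecidableEq (ι → ZMod 2)]
    (x y : ι → ZMod 2) :
    (if x = y then 1 else 0 : ZMod 2) = ∏ i, (x i + (y i + 1)) := by
  have ite_eq_add_add_one : ∀ s t : ZMod 2, s + (t + 1) = if s = t then 1 else 0 := by decide
  simp only [ite_eq_add_add_one, Fintype.prod_boole, funext_iff]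

lemma prod_compl_add_one_eq_ite {ι : Type*} [Fintype ι] [DecidableEq ι] (y : ι → ZMod 2)
    (I : Finset ι) :
    ∏ i ∈ Iᶜ, (y i + 1) = if ∀ i, y i = 1 → i ∈ I then 1 else 0 := by
  have add_one_eq_ite : ∀ t : ZMod 2, t + 1 = if t ≠ 1 then 1 else 0 := by decide
  simp only [add_one_eq_ite, Finset.prod_boole, Finset.mem_compl]
  exact if_congr (forall_congr' fun i => not_imp_not) rfl rfl

theorem eq_sum_anf_mul_prod {n : ℕ} (f : (Fin n → ZMod 2) → ZMod 2) (x : Fin n → ZMod 2) :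
    f x = ∑ I, anf f I * ∏ i ∈ I, x i := by
  calc f x = ∑ y, f y * ∏ i, (x i + (y i + 1)) := by
        simp only [← ite_eq_eq_prod_add_add_one, mul_ite, mul_one, mul_zero,
          Finset.sum_ite_eq, Finset.mem_univ, if_true]
    _ = ∑ y, ∑ I, f y * ((∏ i ∈ I, x i) * ∏ i ∈ Iᶜ, (y i + 1)) := by
        simp only [Finset.prod_add, Finset.powerset_univ, Finset.mul_sum,
          Finset.compl_eq_univ_sdiff]
    _ = ∑ I, ∑ y, f y * ((∏ i ∈ I, x i) * ∏ i ∈ Iᶜ, (y i + 1)) := Finset.sum_comm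
    _ = ∑ I, anf f I * ∏ i ∈ I, x i := by
        simp only [prod_compl_add_one_eq_ite, mul_ite, mul_one, mul_zero, anf, Finset.sum_mul,
          Finset.sum_filter, ite_mul, zero_mul]

lemma card_le_algDegree {n : ℕ} {f : (Fin n → ZMod 2) → ZMod 2} {I : Finset (Fin n)}
    (hI : anf f I ≠ 0) : I.card ≤ algDegree f :=
  Finset.le_sup (f := Finset.card) (Finset.mem_filter.mpr ⟨Finset.mem_univ I, hI⟩)

theorem mem_polyMapDegreeLT_of_algDegree_lt {n d : ℕ} {f : (Fin n → ZMod 2) → ZMod 2}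
    (hf : algDegree f < d) : f ∈ polyMapDegreeLT (Fin n → ZMod 2) (ZMod 2) d := by
  have anf_expansion :
      f = ∑ I, anf f I • ∏ i ∈ I, ⇑(Pi.evalAddMonoidHom (fun _ : Fin n => ZMod 2) i) := by
    ext x
    simpa only [Finset.sum_apply, Pi.smul_apply, Finset.prod_apply, smul_eq_mul,
      Pi.evalAddMonoidHom_apply] using eq_sum_anf_mul_prod f x
  rw [anf_expansion]
  refine Submodule.sum_mem _ fun I _ => ?_
  by_cases hI : anf f I = 0
  · rw [hI, zero_smul]
    exact zero_mem _
  · exact Submodule.smul_mem _ _ (polyMapDegreeLT_mono ((card_le_algDegree hI).trans_lt hf)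
      (prod_addMonoidHom_mem_polyMapDegreeLT _ I))

theorem caStar_mem_polyMapDegreeLT {m n d : ℕ} (h : m ≤ n) {f : (Fin m → ZMod 2) → ZMod 2}
    (hf : f ∈ polyMapDegreeLT (Fin m → ZMod 2) (ZMod 2) d) :
    caStar m n h f ∈ polyMapDegreeLT (Fin n → ZMod 2) (ZMod 2) d := by
  let window (i : Fin (n - m + 1)) : (Fin n → ZMod 2) →+ (Fin m → ZMod 2) :=
    (LinearMap.funLeft (ZMod 2) (ZMod 2)
      fun j : Fin m => (⟨i + j, by omega⟩ : Fin n)).toAddMonoidHom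
  have caStar_eq_sum : caStar m n h f = ∑ i, f ∘ window i := by
    ext x
    rw [Finset.sum_apply]
    rfl
  rw [caStar_eq_sum]
  exact Submodule.sum_mem _ fun i _ => comp_addMonoidHom_mem_polyMapDegreeLT (window i) hf

end AlgebraicNormalForm

section WalshHadamard

/-- The character `t ↦ (-1) ^ t` of `ZMod 2`, through which Boolean functions enter Walsh sums. -/
def signChar : AddChar (ZMod 2) ℤ := AddChar.zmodChar 2 (neg_one_sq (R := ℤ))

lemma signChar_one : signChar 1 = -1 := rfl

lemma signChar_sq (t : ZMod 2) : signChar t ^ 2 = 1 := by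
  rw [sq, ← AddChar.map_add_eq_mul, CharTwo.add_self_eq_zero, AddChar.map_zero_eq_one]

variable {ι : Type*} [Fintype ι] [DecidableEq ι]

/-- The Walsh–Hadamard transform, i.e. the Fourier transform of an integer-valued function on
`ι → ZMod 2`, without normalisation. -/
def hadamardTransform (φ : (ι → ZMod 2) → ℤ) (a : ι → ZMod 2) : ℤ :=
  ∑ x, signChar (a ⬝ᵥ x) * φ x

lemma walsh_eq_hadamardTransform {n : ℕ} (g : (Fin n → ZMod 2) → ZMod 2) (a : Fin n → ZMod 2) :
    walsh g a = hadamardTransform (fun x => signChar (g x)) a := by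
  simp only [hadamardTransform, ← AddChar.map_add_eq_mul, add_comm (a ⬝ᵥ _)]
  rfl

lemma sum_signChar_dotProduct (x : ι → ZMod 2) :
    ∑ a, signChar (a ⬝ᵥ x) = if x = 0 then 2 ^ Fintype.card ι else 0 := by
  split_ifs with hx
  · simp [hx, ZMod.card]
  · let ψ := signChar.compAddMonoidHom (dotProductEquiv (ZMod 2) ι x).toAddMonoidHom
    obtain ⟨i, hi⟩ := Function.ne_iff.mp hx
    have ψ_single : ψ (Pi.single i 1) = -1 := by
      simp [ψ, show x i = 1 from Fin.eq_one_of_ne_zero _ hi, signChar_one]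
    have ψ_ne_zero : ψ ≠ 0 := AddChar.ne_zero_iff.mpr ⟨Pi.single i 1, by rw [ψ_single]; decide⟩
    simpa [ψ, dotProduct_comm] using AddChar.sum_eq_zero_iff_ne_zero.mpr ψ_ne_zero

theorem sum_hadamardTransform_sq (φ : (ι → ZMod 2) → ℤ) :
    ∑ a, hadamardTransform φ a ^ 2 = 2 ^ Fintype.card ι * ∑ x, φ x ^ 2 := by
  have add_eq_zero_iff_eq (x y : ι → ZMod 2) : x + y = 0 ↔ x = y := by
    simp only [funext_iff, Pi.add_apply, Pi.zero_apply, CharTwo.add_eq_zero]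
  calc ∑ a, hadamardTransform φ a ^ 2
      = ∑ a, ∑ x, ∑ y, signChar (a ⬝ᵥ (x + y)) * (φ x * φ y) := by
        simp only [hadamardTransform, sq, Finset.sum_mul_sum, dotProduct_add,
          AddChar.map_add_eq_mul, mul_mul_mul_comm]
    _ = ∑ x, ∑ y, (∑ a, signChar (a ⬝ᵥ (x + y))) * (φ x * φ y) := by
        rw [Finset.sum_comm]
        refine Finset.sum_congr rfl fun x _ => ?_
        simp only [Finset.sum_mul]
        exact Finset.sum_comm
    _ = ∑ x, 2 ^ Fintype.card ι * φ x ^ 2 := by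
        simp only [sum_signChar_dotProduct, add_eq_zero_iff_eq, ite_mul, zero_mul,
          Finset.sum_ite_eq, Finset.mem_univ, if_true, sq]
    _ = 2 ^ Fintype.card ι * ∑ x, φ x ^ 2 := (Finset.mul_sum ..).symm

theorem sum_walsh_sq {n : ℕ} (g : (Fin n → ZMod 2) → ZMod 2) :
    ∑ a, walsh g a ^ 2 = 2 ^ n * 2 ^ n := by
  simp [walsh_eq_hadamardTransform, sum_hadamardTransform_sq, signChar_sq, ZMod.card]

end WalshHadamard

section Autocorrelation

variable {M : Type*} [AddCommGroup M]

/-- The autocorrelation of a Boolean function `g` at `b`: the character sum of the derivative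
`D_b g`, which is written as a forward difference because `+` and `-` agree modulo two. -/
def autocorrelation [Fintype M] (g : M → ZMod 2) (b : M) : ℤ := ∑ x, signChar (Δ_[b] g x)

lemma signChar_fwdDiff (g : M → ZMod 2) (b x : M) :
    signChar (Δ_[b] g x) = signChar (g x) * signChar (g (x + b)) := by
  rw [fwdDiff, CharTwo.sub_eq_add, AddChar.map_add_eq_mul, mul_comm]

variable [Fintype M]

theorem walsh_sq_eq_hadamardTransform_autocorrelation {n : ℕ} (g : (Fin n → ZMod 2) → ZMod 2)
    (a : Fin n → ZMod 2) : walsh g a ^ 2 = hadamardTransform (autocorrelation g) a := by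
  have shift_term (x b : Fin n → ZMod 2) :
      signChar (a ⬝ᵥ x) * signChar (g x) * (signChar (a ⬝ᵥ (x + b)) * signChar (g (x + b))) =
        signChar (a ⬝ᵥ b) * signChar (Δ_[b] g x) := by
    rw [dotProduct_add, AddChar.map_add_eq_mul, signChar_fwdDiff]
    linear_combination signChar (a ⬝ᵥ b) * signChar (g x) * signChar (g (x + b)) *
      signChar_sq (a ⬝ᵥ x)
  calc walsh g a ^ 2
      = ∑ x, ∑ y, signChar (a ⬝ᵥ x) * signChar (g x) * (signChar (a ⬝ᵥ y) * signChar (g y)) := by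
        rw [walsh_eq_hadamardTransform, hadamardTransform, sq, Finset.sum_mul_sum]
    _ = ∑ x, ∑ b, signChar (a ⬝ᵥ b) * signChar (Δ_[b] g x) := by
        refine Finset.sum_congr rfl fun x _ => ?_
        rw [← Equiv.sum_comp (Equiv.addLeft x)]
        simp only [Equiv.coe_addLeft, shift_term]
    _ = hadamardTransform (autocorrelation g) a := by
        simp only [hadamardTransform, autocorrelation, Finset.mul_sum]
        exact Finset.sum_comm

theorem sum_walsh_pow_four {n : ℕ} (g : (Fin n → ZMod 2) → ZMod 2) :
    ∑ a, walsh g a ^ 4 = 2 ^ n * ∑ b, autocorrelation g b ^ 2 := by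
  simpa [← walsh_sq_eq_hadamardTransform_autocorrelation, ← pow_mul] using
    sum_hadamardTransform_sq (autocorrelation g)

lemma sum_signChar_eq_zero_of_map_add_eq_add_one {g : M → ZMod 2} {y : M}
    (hy : ∀ x, g (x + y) = g x + 1) : ∑ x, signChar (g x) = 0 := by
  refine self_eq_neg.mp ?_
  calc ∑ x, signChar (g x) = ∑ x, signChar (g (x + y)) :=
        (Equiv.sum_comp (Equiv.addRight y) fun x => signChar (g x)).symm
    _ = -∑ x, signChar (g x) := by
        simp only [hy, AddChar.map_add_eq_mul, signChar_one, mul_neg_one, Finset.sum_neg_distrib]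

theorem sum_signChar_eq_zero_of_affine_of_not_constant {g : M → ZMod 2}
    (hg : g ∈ polyMapDegreeLT M (ZMod 2) 2) (hg' : g ∉ polyMapDegreeLT M (ZMod 2) 1) :
    ∑ x, signChar (g x) = 0 := by
  simp only [mem_polyMapDegreeLT_succ (d := 0), mem_polyMapDegreeLT_zero, not_forall] at hg'
  obtain ⟨y, hy⟩ := hg'
  obtain ⟨z, hz⟩ := Function.ne_iff.mp hy
  have fwdDiff_constant := mem_polyMapDegreeLT_one.mp (hg y)
  refine sum_signChar_eq_zero_of_map_add_eq_add_one (y := y) fun x => ?_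
  have fwdDiff_eq_one : g (x + y) - g x = 1 :=
    (fwdDiff_constant x).trans ((fwdDiff_constant z).symm.trans (Fin.eq_one_of_ne_zero _ hz))
  rw [← fwdDiff_eq_one, add_sub_cancel]

end Autocorrelation

section LinearStructures

variable {n : ℕ} {g : (Fin n → ZMod 2) → ZMod 2}

lemma isLinearStructure_iff_fwdDiff_mem {b : Fin n → ZMod 2} :
    isLinearStructure g b ↔ Δ_[b] g ∈ polyMapDegreeLT (Fin n → ZMod 2) (ZMod 2) 1 := by
  have derivative_eq (x : Fin n → ZMod 2) : g x + g (x + b) = Δ_[b] g x := by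
    rw [fwdDiff, CharTwo.sub_eq_add, add_comm]
  simp only [isLinearStructure, derivative_eq, mem_polyMapDegreeLT_one]
  constructor
  · rintro (hzero | hone) x
    · rw [hzero, hzero]
    · rw [hone, hone]
  · intro hconst
    rcases eq_or_ne (Δ_[b] g 0) 0 with hb | hb
    · exact Or.inl fun x => (hconst x).trans hb
    · exact Or.inr fun x => (hconst x).trans (Fin.eq_one_of_ne_zero _ hb)

theorem autocorrelation_sq_of_quadratic
    (hg : g ∈ polyMapDegreeLT (Fin n → ZMod 2) (ZMod 2) 3) (b : Fin n → ZMod 2)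
    [Decidable (isLinearStructure g b)] :
    autocorrelation g b ^ 2 = if isLinearStructure g b then 2 ^ n * 2 ^ n else 0 := by
  split_ifs with hb
  · have hconst := mem_polyMapDegreeLT_one.mp (isLinearStructure_iff_fwdDiff_mem.mp hb)
    simp [autocorrelation, hconst, mul_pow, signChar_sq, ZMod.card, ← sq]
  · rw [isLinearStructure_iff_fwdDiff_mem] at hb
    rw [autocorrelation, sum_signChar_eq_zero_of_affine_of_not_constant (hg b) hb,
      zero_pow two_ne_zero]

theorem sq_amplitude_eq_two_pow_mul_card
    (hg : g ∈ polyMapDegreeLT (Fin n → ZMod 2) (ZMod 2) 3) {A : ℤ}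
    (hA : ∀ a, walsh g a = 0 ∨ walsh g a = A ∨ walsh g a = -A) :
    A ^ 2 = 2 ^ n * Nat.card {b // isLinearStructure g b} := by
  classical
  have walsh_pow_four (a : Fin n → ZMod 2) : walsh g a ^ 4 = A ^ 2 * walsh g a ^ 2 := by
    rcases hA a with h | h | h <;> rw [h] <;> ring
  have sum_autocorrelation_sq :
      ∑ b, autocorrelation g b ^ 2 =
        Nat.card {b // isLinearStructure g b} * (2 ^ n * 2 ^ n : ℤ) := by
    simp only [autocorrelation_sq_of_quadratic hg]
    rw [← Finset.sum_filter, Finset.sum_const, nsmul_eq_mul, ← Fintype.card_subtype,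
      Nat.card_eq_fintype_card]
  have four_pow_ne_zero : (2 ^ n * 2 ^ n : ℤ) ≠ 0 := by positivity
  refine mul_right_cancel₀ four_pow_ne_zero ?_
  calc A ^ 2 * (2 ^ n * 2 ^ n) = ∑ a, walsh g a ^ 4 := by
        simp only [walsh_pow_four, ← Finset.mul_sum, sum_walsh_sq]
    _ = 2 ^ n * Nat.card {b // isLinearStructure g b} * (2 ^ n * 2 ^ n) := by
        rw [sum_walsh_pow_four, sum_autocorrelation_sq, mul_assoc]

lemma sbLambda_sq (n : ℕ) : sbLambda n ^ 2 = 2 ^ n * if Odd n then 2 else 4 := by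
  unfold sbLambda
  split_ifs with hn
  · obtain ⟨k, rfl⟩ := hn
    rw [show (2 * k + 1 + 1) / 2 = k + 1 by omega]
    ring
  · obtain ⟨k, rfl⟩ := Nat.not_odd_iff_even.mp hn
    rw [show (k + k + 2) / 2 = k + 1 by omega]
    ring

lemma isLinearStructure_zero (g : (Fin n → ZMod 2) → ZMod 2) : isLinearStructure g 0 :=
  Or.inl fun x => by rw [add_zero, CharTwo.add_self_eq_zero]

lemma card_ne_zero_isLinearStructure_add_one (g : (Fin n → ZMod 2) → ZMod 2) :
    Nat.card {b // b ≠ 0 ∧ isLinearStructure g b} + 1 = Nat.card {b // isLinearStructure g b} := by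
  have ne_zero_eq_sdiff :
      {b | b ≠ 0 ∧ isLinearStructure g b} = {b | isLinearStructure g b} \ {0} := by
    ext b
    exact and_comm
  change Set.ncard {b | b ≠ 0 ∧ isLinearStructure g b} + 1 = Set.ncard {b | isLinearStructure g b}
  rw [ne_zero_eq_sdiff]
  exact Set.ncard_sdiff_singleton_add_one (s := {b | isLinearStructure g b})
    (isLinearStructure_zero g)

theorem card_ne_zero_isLinearStructure_of_semiBent
    (hg : g ∈ polyMapDegreeLT (Fin n → ZMod 2) (ZMod 2) 3) (hsb : semiBent g) :
    Nat.card {b // b ≠ 0 ∧ isLinearStructure g b} = if Odd n then 1 else 3 := by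
  have two_pow_ne_zero : (2 ^ n : ℤ) ≠ 0 := by positivity
  have card_eq := mul_left_cancel₀ two_pow_ne_zero
    ((sq_amplitude_eq_two_pow_mul_card hg hsb).symm.trans (sbLambda_sq n))
  rw [← card_ne_zero_isLinearStructure_add_one] at card_eq
  split_ifs at card_eq ⊢ <;> omega

end LinearStructures

theorem quadratic_linear_structures_general {m n : ℕ} (h : m ≤ n)
    {f : (Fin m → ZMod 2) → ZMod 2} (hdeg : algDegree f ≤ 2) (hsb : semiBent (caStar m n h f)) :
    Nat.card {b : Fin n → ZMod 2 // b ≠ 0 ∧ isLinearStructure (caStar m n h f) b} =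
      if Odd n then 1 else 3 :=
  card_ne_zero_isLinearStructure_of_semiBent
    (caStar_mem_polyMapDegreeLT h (mem_polyMapDegreeLT_of_algDegree_lt (Nat.lt_succ_of_le hdeg)))
    hsb

/-- for `m ∈ {3,5,6}`, every quadratic `m`-variable rule (zero constant
term) whose CA-based construction yields semi-bent balanced functions for all
`m ≤ n ≤ 20` has exactly 1 nonzero linear structure when `n` is odd and 3 when `n`
is even, for all `m ≤ n ≤ 20`. -/
theorem quadratic_linear_structures (m : ℕ) (hm : m = 3 ∨ m = 5 ∨ m = 6)
    (f : (Fin m → ZMod 2) → ZMod 2)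
    (hdeg : algDegree f = 2) (hconst : anf f ∅ = 0)
    (hgood : ∀ n (h : m ≤ n), n ≤ 20 →
      semiBent (caStar m n h f) ∧ balanced (caStar m n h f)) :
    ∀ n (h : m ≤ n), n ≤ 20 →
      Nat.card {b : Fin n → ZMod 2 //
        b ≠ 0 ∧ isLinearStructure (caStar m n h f) b} =
      if Odd n then 1 else 3 :=
  fun n h hn => quadratic_linear_structures_general h hdeg.le (hgood n h hn).1
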